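/- For every positive integer n there exists a function g : ℕ → ℕ such that for every l ∈ ℕ there exists m ∈ ℕ such that for every function p : {0,…,n−1} → ℕ there exists i < m with g(p(k)+i) = l for every k < n. -/

import Mathlib

/-!
Fix pairwise coprime moduli `q (l, k) > n`, for `l : ℕ` and `k < n`, and let `g x` be the least
`l` such that some `q (l, k)` divides `x`. Given `p` and `l`, a shift `i` gives `g (p k + i) = l`
for all `k` as soon as `q (l, k) ∣ p k + i` for all `k`, while no `q (l', k')` with `l' < l`
divides any `p k + i`. Each modulus constrains only the residue of `i`: for `q (l, k)` the residue
is prescribed, and for `q (l', k')` at most `n < q (l', k')` residues are forbidden. The Chinese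
remainder theorem produces `i` below the product of the moduli involved, and this bound does not
depend on `p`.
-/

theorem exists_forall_not_dvd_add {ι : Type*} [Fintype ι] {q : ℕ} (hq : Fintype.card ι < q)
    (p : ι → ℕ) : ∃ a : ℕ, ∀ k, ¬ q ∣ p k + a := by
  have : NeZero q := ⟨by lia⟩
  have not_surjective : ¬ Function.Surjective fun k => -(p k : ZMod q) := fun h => by
    have := Fintype.card_le_of_surjective _ h
    rw [ZMod.card] at this
    lia
  obtain ⟨r, hr⟩ := not_forall.mp not_surjective
  refine ⟨r.val, fun k hk => hr ⟨k, ?_⟩⟩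
  rw [← ZMod.natCast_eq_zero_iff, Nat.cast_add, ZMod.natCast_rightInverse r] at hk
  exact neg_eq_of_add_eq_zero_right hk

theorem exists_dvd_add {q : ℕ} (hq : q ≠ 0) (x : ℕ) : ∃ a : ℕ, q ∣ x + a := by
  have : NeZero q := ⟨hq⟩
  refine ⟨(-(x : ZMod q)).val, ?_⟩
  rw [← ZMod.natCast_eq_zero_iff, Nat.cast_add, ZMod.natCast_rightInverse, add_neg_cancel]

theorem exists_pairwise_coprime_gt (α : Type*) [Countable α] (N : ℕ) :
    ∃ q : α → ℕ, Pairwise (Function.onFun Nat.Coprime q) ∧ ∀ j, N < q j := by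
  obtain ⟨e, he⟩ := Countable.exists_injective_nat α
  refine ⟨fun j => Nat.nth Nat.Prime (N + e j), fun i j hij => ?_, fun j => ?_⟩
  · refine (Nat.coprime_primes (Nat.prime_nth_prime _) (Nat.prime_nth_prime _)).mpr fun h => hij ?_
    exact he (Nat.add_left_cancel (Nat.nth_injective Nat.infinite_setOfPred_prime h))
  · have := Nat.add_two_le_nth_prime (N + e j)
    lia

theorem exists_lt_prod_forall_dvd_add_iff {α : Type*} {q : α → ℕ} {s : Finset α}
    (hq : ∀ j ∈ s, q j ≠ 0) (hcop : Set.Pairwise (s : Set α) (Function.onFun Nat.Coprime q))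
    (a : α → ℕ) : ∃ i < ∏ j ∈ s, q j, ∀ j ∈ s, ∀ x, q j ∣ x + i ↔ q j ∣ x + a j :=
  let i := Nat.chineseRemainderOfFinset a q s hq hcop
  ⟨i, Nat.chineseRemainderOfFinset_lt_prod a q hq hcop,
    fun j hj x => ((i.2 j hj).add_left x).dvd_iff dvd_rfl⟩

section LeastDividingBlock

variable {ι : Type*}

/-- The least index `l` of a block of moduli `q (l, ·)` one of which divides `x`. It serves as the
colouring `g`; where no modulus divides `x` the infimum has the junk value `0`. -/
noncomputable def leastDividingBlock (q : ℕ × ι → ℕ) (x : ℕ) : ℕ :=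
  sInf {l | ∃ k, q (l, k) ∣ x}

variable {q : ℕ × ι → ℕ}

theorem leastDividingBlock_eq {l x : ℕ} {k : ι} (hdvd : q (l, k) ∣ x)
    (hnot : ∀ l' < l, ∀ k', ¬ q (l', k') ∣ x) : leastDividingBlock q x = l :=
  le_antisymm (Nat.sInf_le ⟨k, hdvd⟩) <| le_csInf ⟨l, k, hdvd⟩ fun l' ⟨k', hk'⟩ =>
    not_lt.mp fun hlt => hnot l' hlt k' hk'

theorem exists_lt_prod_forall_leastDividingBlock_add_eq [Fintype ι]
    (hcop : Pairwise (Function.onFun Nat.Coprime q)) (hq : ∀ j, Fintype.card ι < q j)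
    (l : ℕ) (p : ι → ℕ) :
    ∃ i < ∏ j ∈ Finset.range (l + 1) ×ˢ Finset.univ, q j,
      ∀ k, leastDividingBlock q (p k + i) = l := by
  have q_ne_zero (j : ℕ × ι) : q j ≠ 0 := Nat.ne_zero_of_lt (hq j)
  have exists_residue (j : ℕ × ι) : ∃ a,
      (j.1 < l → ∀ k, ¬ q j ∣ p k + a) ∧ (j.1 = l → q j ∣ p j.2 + a) := by
    by_cases hj : j.1 < l
    · obtain ⟨a, ha⟩ := exists_forall_not_dvd_add (hq j) p
      exact ⟨a, fun _ => ha, fun h => absurd h hj.ne⟩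
    · obtain ⟨a, ha⟩ := exists_dvd_add (q_ne_zero j) (p j.2)
      exact ⟨a, fun h => absurd h hj, fun _ => ha⟩
  choose a not_dvd dvd using exists_residue
  obtain ⟨i, hi, dvd_iff⟩ := exists_lt_prod_forall_dvd_add_iff
    (s := Finset.range (l + 1) ×ˢ Finset.univ) (fun j _ => q_ne_zero j) (hcop.set_pairwise _) a
  refine ⟨i, hi, fun k => leastDividingBlock_eq (k := k) ?_ fun l' hl' k' => ?_⟩
  · exact (dvd_iff (l, k) (by simp) (p k)).mpr (dvd (l, k) rfl)
  · exact (dvd_iff (l', k') (by simpa using Nat.lt_succ_of_lt hl') (p k)).not.mpr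
      (not_dvd (l', k') hl' k)

end LeastDividingBlock

/-- Lemma 3.7 ("intermediate"): for every positive integer `n` there is a function
`g : ℕ → ℕ` such that for every `l < ω` there is an `m < ω` such that for every
`p : n → ℕ` there is an `i < m` with `g (p k + i) = l` for every `k < n`. -/
theorem intermediate (n : ℕ) (hn : 0 < n) :
    ∃ g : ℕ → ℕ, ∀ l : ℕ, ∃ m : ℕ, ∀ p : Fin n → ℕ,
      ∃ i < m, ∀ k : Fin n, g (p k + i) = l := by
  obtain ⟨q, hcop, hq⟩ := exists_pairwise_coprime_gt (ℕ × Fin n) (Fintype.card (Fin n))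
  exact ⟨leastDividingBlock q, fun l =>
    ⟨_, exists_lt_prod_forall_leastDividingBlock_add_eq hcop hq l⟩⟩
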